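/- Let n ≥ 2. An operator Y : 𝒫ⁿ → ℝⁿ is a simple, continuous (with respect to the Hausdorff metric) and SL(n) covariant valuation if and only if there exists a constant c ∈ ℝ such that Y(Q) = c m(Q) for all Q ∈ 𝒫ⁿ. -/

import Mathlib

open MeasureTheory Filter Set Topology TopologicalSpace
open scoped ENNReal

noncomputable section

/-- `ℝⁿ` with the Euclidean norm. -/
abbrev En (n : ℕ) := EuclideanSpace ℝ (Fin n)

/-- `φ : ℝ → ℝ` is a Young function (viewed as a function on `[0,∞)`):
`φ t = ∫₀ᵗ ψ(s) ds` for a non-decreasing, right-continuous `ψ` with `ψ 0 = 0`,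
`ψ s > 0` for `s > 0` and `ψ s → ∞` as `s → ∞`. -/
def IsYoung (φ : ℝ → ℝ) : Prop :=
  ∃ ψ : ℝ → ℝ, (∀ s : ℝ, 0 ≤ s → 0 ≤ ψ s) ∧ MonotoneOn ψ (Set.Ici 0) ∧
    (∀ s : ℝ, 0 ≤ s → ContinuousWithinAt ψ (Set.Ici s) s) ∧
    ψ 0 = 0 ∧ (∀ s : ℝ, 0 < s → 0 < ψ s) ∧
    Tendsto ψ atTop atTop ∧
    (∀ t : ℝ, 0 ≤ t → φ t = ∫ s in (0:ℝ)..t, ψ s)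

/-- The complementary Young function `φ*(t) = sup_{s ≥ 0} (s t − φ s)`. -/
def conjYoung (φ : ℝ → ℝ) (t : ℝ) : ℝ :=
  sSup {y : ℝ | ∃ s : ℝ, 0 ≤ s ∧ y = s * t - φ s}

/-- The measure `μₙ(M) = ∫_M |x| dx`. -/
def mun {n : ℕ} (M : Set (En n)) : ℝ≥0∞ :=
  ∫⁻ x in M, ENNReal.ofReal ‖x‖

/-- Membership in the Orlicz space `L^φ(ℝⁿ, |x|dx)`:
`h` is measurable and `∫ φ(δ|h(x)|)|x| dx < ∞` for every `δ > 0`. -/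
def MemOrlicz {n : ℕ} (φ : ℝ → ℝ) (h : En n → ℝ) : Prop :=
  Measurable h ∧ ∀ δ : ℝ, 0 < δ →
    ∫⁻ x : En n, ENNReal.ofReal (φ (δ * |h x|)) * ENNReal.ofReal ‖x‖ < ⊤

/-- The Orlicz norm
`‖h‖_φ = sup { ∫ |h g| |x| dx : g measurable, ∫ φ*(|g|)|x| dx ≤ 1 }` (valued in `[0,∞]`). -/
def orliczNorm {n : ℕ} (φ : ℝ → ℝ) (h : En n → ℝ) : ℝ≥0∞ :=
  ⨆ g ∈ {g : En n → ℝ | Measurable g ∧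
      ∫⁻ x : En n, ENNReal.ofReal (conjYoung φ |g x|) * ENNReal.ofReal ‖x‖ ≤ 1},
    ∫⁻ x : En n, ENNReal.ofReal |h x * g x| * ENNReal.ofReal ‖x‖

/-- The moment vector `m(Q) = ∫_Q x dx` of a set `Q ⊆ ℝⁿ`. -/
def momentSet {n : ℕ} (Q : Set (En n)) : En n := ∫ x in Q, x

/-- The action of an `n × n` matrix on `ℝⁿ`. -/
def matVec {n : ℕ} (ϑ : Matrix (Fin n) (Fin n) ℝ) (x : En n) : En n :=
  Matrix.toEuclideanLin ϑ x

/-- A compact convex polytope: the convex hull of a nonempty finite set. -/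
def IsPolytope {n : ℕ} (Q : Set (En n)) : Prop :=
  ∃ S : Finset (En n), S.Nonempty ∧ Q = convexHull ℝ (S : Set (En n))

/-- The space of polytopes, topologized via the Hausdorff metric on nonempty
compact subsets of `ℝⁿ`. -/
abbrev PolySp (n : ℕ) := {K : NonemptyCompacts (En n) // IsPolytope (K : Set (En n))}

/-- `Y` is a valuation on polytopes. -/
def IsPolyValuation {n : ℕ} (Y : Set (En n) → En n) : Prop :=
  ∀ Q₁ Q₂ : Set (En n), IsPolytope Q₁ → IsPolytope Q₂ → IsPolytope (Q₁ ∪ Q₂) →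
    IsPolytope (Q₁ ∩ Q₂) → Y Q₁ + Y Q₂ = Y (Q₁ ∪ Q₂) + Y (Q₁ ∩ Q₂)

/-- `Y` is `SL(n)` covariant on polytopes: `Y(ϑ Q) = ϑ (Y Q)` for `det ϑ = 1`. -/
def IsPolySLCovariant {n : ℕ} (Y : Set (En n) → En n) : Prop :=
  ∀ Q : Set (En n), IsPolytope Q → ∀ ϑ : Matrix (Fin n) (Fin n) ℝ, ϑ.det = 1 →
    Y (matVec ϑ '' Q) = matVec ϑ (Y Q)

/-- `Ψ` is a valuation on `L^φ(ℝⁿ, |x|dx)`. -/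
def IsOrliczValuation {n : ℕ} (φ : ℝ → ℝ) (Ψ : (En n → ℝ) → En n) : Prop :=
  ∀ h₁ h₂ : En n → ℝ, MemOrlicz φ h₁ → MemOrlicz φ h₂ →
    Ψ (fun x => max (h₁ x) (h₂ x)) + Ψ (fun x => min (h₁ x) (h₂ x)) = Ψ h₁ + Ψ h₂

/-- `Ψ` is `SL(n)` covariant: `Ψ(h ∘ ϑ⁻¹) = ϑ (Ψ h)` for `det ϑ = 1`. -/
def IsOrliczSLCovariant {n : ℕ} (φ : ℝ → ℝ) (Ψ : (En n → ℝ) → En n) : Prop :=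
  ∀ h : En n → ℝ, MemOrlicz φ h → ∀ ϑ : Matrix (Fin n) (Fin n) ℝ, ϑ.det = 1 →
    Ψ (fun x => h (matVec ϑ⁻¹ x)) = matVec ϑ (Ψ h)

/-- `Ψ` is continuous: `Ψ(h_k) → Ψ(h)` whenever `‖h_k − h‖_φ → 0`. -/
def OrliczContinuous {n : ℕ} (φ : ℝ → ℝ) (Ψ : (En n → ℝ) → En n) : Prop :=
  ∀ (hk : ℕ → En n → ℝ) (h : En n → ℝ), (∀ k, MemOrlicz φ (hk k)) → MemOrlicz φ h →
    Tendsto (fun k => orliczNorm φ (fun x => hk k x - h x)) atTop (𝓝 0) →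
    Tendsto (fun k => Ψ (hk k)) atTop (𝓝 (Ψ h))

/-- `Ψ` identifies functions that agree almost everywhere. -/
def RespectsAE {n : ℕ} (φ : ℝ → ℝ) (Ψ : (En n → ℝ) → En n) : Prop :=
  ∀ h₁ h₂ : En n → ℝ, MemOrlicz φ h₁ → MemOrlicz φ h₂ →
    (∀ᵐ x : En n, h₁ x = h₂ x) → Ψ h₁ = Ψ h₂

/-- The `Δ₂` condition: `φ(2t) ≤ C φ(t)` for all `t ≥ T`. -/
def SatisfiesDelta2 (φ : ℝ → ℝ) : Prop :=
  ∃ T C : ℝ, 0 ≤ T ∧ 0 < C ∧ ∀ t : ℝ, T ≤ t → φ (2 * t) ≤ C * φ t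

/-- A closed cube in `ℝⁿ`: `{x : cᵢ ≤ xᵢ ≤ dᵢ}` with all side lengths equal. -/
def IsClosedCube {n : ℕ} (C : Set (En n)) : Prop :=
  ∃ c d : Fin n → ℝ, (∃ L : ℝ, 0 ≤ L ∧ ∀ i, d i - c i = L) ∧
    C = {x : En n | ∀ i, c i ≤ x i ∧ x i ≤ d i}

/-!
A simple valuation is additive when a simplex is cut along a hyperplane through all but two of its
vertices. By such cuts, vanishing on the simplices with a vertex at the origin propagates to all
simplices and then to all polytopes. On a simplex with vertices `0, v 0, …, v (n - 1)`, where
`v` has determinant `d`, covariance under `SL(n)` forces the value `∑ k, A d k • v k` with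
coefficients depending on `d` only. Cutting the edge from `v i` to `v j` gives functional equations
for `A · i` and `A · j` whose only continuous solution is `A d i = A d j = c * d`. So a simple,
continuous and covariant valuation is determined by one constant `c`, and that of the moment vector
is nonzero.
-/

theorem card_insert_erase_erase_lt {α : Type*} [DecidableEq α] {S : Finset α} {x y : α}
    (hx : x ∈ S) (hy : y ∈ S.erase x) (p : α) : (insert p ((S.erase x).erase y)).card < S.card :=
  (Finset.card_insert_le p _).trans_lt <|
    (Nat.succ_le_of_lt (Finset.card_erase_lt_of_mem hy)).trans_lt (Finset.card_erase_lt_of_mem hx)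

section AffineGeometry

variable {𝕜 E : Type*} [Field 𝕜] [AddCommGroup E] [Module 𝕜 E]

theorem exists_affineMap_eq_one_eq_zero {R : Set E} (hR : R.Nonempty) {x : E}
    (hx : x ∉ affineSpan 𝕜 R) : ∃ f : E →ᵃ[𝕜] 𝕜, f x = 1 ∧ ∀ y ∈ R, f y = 0 := by
  obtain ⟨r, hr⟩ := hR
  obtain ⟨g, hgx, hg⟩ := Submodule.exists_le_ker_of_notMem
    (mt (AffineSubspace.vsub_right_mem_direction_iff_mem (subset_affineSpan 𝕜 R hr) x).1 hx)
  refine ⟨(g (x -ᵥ r))⁻¹ • (g.toAffineMap - AffineMap.const 𝕜 E (g r)), ?_, fun y hy => ?_⟩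
  · rw [vsub_eq_sub, map_sub] at hgx ⊢
    exact inv_mul_cancel₀ hgx
  · have hgy : g (y -ᵥ r) = 0 := hg (AffineSubspace.vsub_mem_direction
      (subset_affineSpan 𝕜 R hy) (subset_affineSpan 𝕜 R hr))
    rw [vsub_eq_sub, map_sub] at hgy
    exact mul_eq_zero_of_right _ hgy

theorem affineMap_eq_zero_of_mem_affineSpan {R : Set E} {f : E →ᵃ[𝕜] 𝕜} (hf : ∀ y ∈ R, f y = 0)
    {p : E} (hp : p ∈ affineSpan 𝕜 R) : f p = 0 :=
  AffineMap.eqOn_affineSpan (g := AffineMap.const 𝕜 E 0) hf hp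

theorem affineIndependent_insert {R : Set E} (hR : AffineIndependent 𝕜 ((↑) : R → E)) {v : E}
    (hv : v ∉ affineSpan 𝕜 R) : AffineIndependent 𝕜 ((↑) : ↥(insert v R) → E) := by
  let v' : ↥(insert v R) := ⟨v, mem_insert v R⟩
  have mem_of_ne (y : {y // y ≠ v'}) : (y : E) ∈ R :=
    y.1.2.resolve_left fun h => y.2 (Subtype.ext h)
  have hrest : AffineIndependent 𝕜 fun y : {y // y ≠ v'} => (y : E) :=
    hR.comp_embedding ⟨fun y => ⟨y, mem_of_ne y⟩,
      fun y z h => Subtype.ext (Subtype.ext (Subtype.mk.inj h))⟩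
  refine hrest.affineIndependent_of_notMem_span fun h => hv (affineSpan_mono 𝕜 ?_ h)
  rintro _ ⟨y, hy, rfl⟩
  exact mem_of_ne ⟨y, hy⟩

theorem notMem_affineSpan_of_insert {R : Set E} {x : E} (hxR : x ∉ R)
    (h : AffineIndependent 𝕜 ((↑) : ↥(insert x R) → E)) : x ∉ affineSpan 𝕜 R := by
  refine fun hx => h.notMem_affineSpan_sdiff ⟨x, mem_insert x R⟩ univ
    (affineSpan_mono 𝕜 (fun y hy => ?_) hx)
  exact ⟨⟨y, mem_insert_of_mem x hy⟩,
    ⟨mem_univ _, fun hyx => hxR (Subtype.mk.inj hyx ▸ hy)⟩, rfl⟩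

theorem exists_insert_insert_eq_of_affineIndependent {T : Set E}
    (hT : AffineIndependent 𝕜 ((↑) : T → E)) {x y : E} (hx : x ∈ T) (hy : y ∈ T) (hxy : x ≠ y) :
    ∃ R : Set E, insert x (insert y R) = T ∧ AffineIndependent 𝕜 ((↑) : R → E) ∧
      x ∉ affineSpan 𝕜 (insert y R) ∧ y ∉ affineSpan 𝕜 (insert x R) := by
  obtain ⟨U, hxU, rfl⟩ : ∃ U, x ∉ U ∧ insert x U = T :=
    ⟨T \ {x}, notMem_sdiff_of_mem (mem_singleton x), insert_sdiff_self_of_mem hx⟩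
  obtain ⟨R, hyR, rfl⟩ : ∃ R, y ∉ R ∧ insert y R = U :=
    ⟨U \ {y}, notMem_sdiff_of_mem (mem_singleton y),
      insert_sdiff_self_of_mem (hy.resolve_left hxy.symm)⟩
  refine ⟨R, rfl, hT.mono ((subset_insert y R).trans (subset_insert x _)),
    notMem_affineSpan_of_insert hxU hT, notMem_affineSpan_of_insert ?_ ?_⟩
  · exact fun h => h.elim hxy.symm hyR
  · rwa [insert_comm]

variable {S : Finset E}

theorem sum_smul_mem_affineSpan {a : E → 𝕜} (ha : ∑ y ∈ S, a y = 1) :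
    ∑ y ∈ S, a y • y ∈ affineSpan 𝕜 (S : Set E) := by
  have := affineCombination_mem_affineSpan_image (k := 𝕜) ha
    (s' := (S : Set E)) (fun _ hy hyS => absurd hy hyS) id
  rwa [S.affineCombination_eq_linear_combination id a ha, image_id] at this

theorem exists_sum_smul_eq_of_mem_affineSpan {v : E} (hv : v ∈ affineSpan 𝕜 (S : Set E)) :
    ∃ a : E → 𝕜, ∑ y ∈ S, a y = 1 ∧ ∑ y ∈ S, a y • y = v := by
  obtain ⟨w, hw, rfl⟩ := eq_affineCombination_of_mem_affineSpan_of_fintype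
    (p := ((↑) : S → E)) (by simpa using hv)
  have extend_apply (y : S) : Function.extend ((↑) : S → E) w 0 y = w y :=
    Subtype.val_injective.extend_apply w 0 y
  refine ⟨Function.extend (↑) w 0, ?_, ?_⟩
  · rw [← hw, ← Finset.sum_coe_sort]
    simp only [extend_apply]
  · rw [Finset.affineCombination_eq_linear_combination _ _ _ hw, ← Finset.sum_coe_sort]
    simp only [extend_apply]

theorem lineMap_sum_erase_smul [DecidableEq E] {a : E → 𝕜} {x : E} (hx : x ∈ S) (hax : a x ≠ 1) :
    AffineMap.lineMap (∑ y ∈ S.erase x, (a y / (1 - a x)) • y) x (a x) = ∑ y ∈ S, a y • y := by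
  rw [AffineMap.lineMap_apply_module, Finset.smul_sum, ← Finset.sum_erase_add _ _ hx]
  simp only [smul_smul, mul_div_cancel₀ _ (sub_ne_zero.2 hax.symm)]

theorem exists_sum_smul_insert_erase_erase [DecidableEq E] (a : E → 𝕜) {x y p : E} (hx : x ∈ S)
    (hy : y ∈ S.erase x) (hpS : p ∉ (S.erase x).erase y)
    (hp : (a x + a y) • p = a x • x + a y • y) :
    ∃ b : E → 𝕜, ∑ z ∈ insert p ((S.erase x).erase y), b z = ∑ z ∈ S, a z ∧
      ∑ z ∈ insert p ((S.erase x).erase y), b z • z = ∑ z ∈ S, a z • z := by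
  have update_apply : ∀ z ∈ (S.erase x).erase y, Function.update a p (a x + a y) z = a z :=
    fun z hz => Function.update_of_ne (ne_of_mem_of_not_mem hz hpS) _ _
  refine ⟨Function.update a p (a x + a y), ?_, ?_⟩
  · rw [Finset.sum_insert hpS, Function.update_self, Finset.sum_congr rfl update_apply, add_assoc,
      Finset.add_sum_erase _ _ hy, Finset.add_sum_erase _ _ hx]
  · rw [Finset.sum_insert hpS, Function.update_self, hp,
      Finset.sum_congr rfl fun z hz => by rw [update_apply z hz], add_assoc,
      Finset.add_sum_erase _ (fun z => a z • z) hy, Finset.add_sum_erase _ (fun z => a z • z) hx]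

end AffineGeometry

section OpenSegment

variable {𝕜 E : Type*} [Field 𝕜] [LinearOrder 𝕜] [IsStrictOrderedRing 𝕜] [AddCommGroup E]
  [Module 𝕜 E]

theorem exists_mem_openSegment_smul_eq {s t : 𝕜} (hst : 0 < s * t) (x y : E) :
    ∃ p ∈ openSegment 𝕜 x y, (s + t) • p = s • x + t • y := by
  have hs : 0 < s * (s + t) := by nlinarith [sq_nonneg s]
  have ht : 0 < t * (s + t) := by nlinarith [sq_nonneg t]
  have hne : s + t ≠ 0 := right_ne_zero_of_mul hs.ne'
  refine ⟨(s + t)⁻¹ • (s • x + t • y), ⟨s / (s + t), t / (s + t), ?_, ?_, ?_, ?_⟩, ?_⟩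
  · exact div_pos_iff.2 (mul_pos_iff.1 hs)
  · exact div_pos_iff.2 (mul_pos_iff.1 ht)
  · rw [← add_div, div_self hne]
  · match_scalars <;> field
  · rw [smul_inv_smul₀ hne]

theorem notMem_of_mem_openSegment {s : AffineSubspace 𝕜 E} {x y p : E}
    (hp : p ∈ openSegment 𝕜 x y) (hps : p ∈ s) (hx : x ∉ s) : y ∉ s := by
  rw [openSegment_eq_image_lineMap] at hp
  obtain ⟨t, ht, rfl⟩ := hp
  refine fun hy => hx ?_
  convert AffineMap.lineMap_mem (1 - t)⁻¹ hy hps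
  simp only [AffineMap.lineMap_apply_module]
  match_scalars <;> field [show 1 - t ≠ 0 by linarith [ht.2]]

theorem notMem_affineSpan_of_mem_openSegment {R : Set E} {x y p : E}
    (hp : p ∈ openSegment 𝕜 x y) (hx : x ∉ affineSpan 𝕜 (insert y R)) : p ∉ affineSpan 𝕜 R := by
  obtain ⟨f, hfx, hf⟩ := exists_affineMap_eq_one_eq_zero (insert_nonempty y R) hx
  rw [openSegment_eq_image_lineMap] at hp
  obtain ⟨t, ht, rfl⟩ := hp
  intro hpR
  have hfp := affineMap_eq_zero_of_mem_affineSpan (fun z hz => hf z (mem_insert_of_mem y hz)) hpR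
  rw [AffineMap.apply_lineMap, hfx, hf y (mem_insert y R), AffineMap.lineMap_apply_ring] at hfp
  linarith [ht.2]

theorem notMem_affineSpan_insert_of_mem_openSegment {R : Set E} {x y p : E}
    (hp : p ∈ openSegment 𝕜 x y) (hx : x ∉ affineSpan 𝕜 (insert y R))
    (hy : y ∉ affineSpan 𝕜 (insert x R)) : x ∉ affineSpan 𝕜 (insert p R) := by
  obtain ⟨f, hfx, hf⟩ := exists_affineMap_eq_one_eq_zero (insert_nonempty y R) hx
  obtain ⟨g, hgy, hg⟩ := exists_affineMap_eq_one_eq_zero (insert_nonempty x R) hy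
  rw [openSegment_eq_image_lineMap] at hp
  obtain ⟨t, ht, rfl⟩ := hp
  intro hxp
  have h := affineMap_eq_zero_of_mem_affineSpan (f := t • f - (1 - t) • g) ?_ hxp
  · simp only [AffineMap.coe_sub, AffineMap.coe_smul, Pi.sub_apply, Pi.smul_apply, hfx,
      hg x (mem_insert x R), smul_eq_mul] at h
    linarith [ht.1]
  · rintro z (rfl | hz) <;>
      simp only [AffineMap.coe_sub, AffineMap.coe_smul, Pi.sub_apply, Pi.smul_apply, smul_eq_mul]
    · rw [AffineMap.apply_lineMap, AffineMap.apply_lineMap, hfx, hgy, hf y (mem_insert y R),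
        hg x (mem_insert x R), AffineMap.lineMap_apply_ring, AffineMap.lineMap_apply_ring]
      ring
    · rw [hf z (mem_insert_of_mem y hz), hg z (mem_insert_of_mem x hz)]
      ring

theorem affineIndependent_insert_of_mem_openSegment {R : Set E} {x y p : E}
    (hR : AffineIndependent 𝕜 ((↑) : R → E)) (hp : p ∈ openSegment 𝕜 x y)
    (hx : x ∉ affineSpan 𝕜 (insert y R)) (hy : y ∉ affineSpan 𝕜 (insert x R)) :
    AffineIndependent 𝕜 ((↑) : ↥(insert x (insert p R)) → E) :=
  affineIndependent_insert
    (affineIndependent_insert hR (notMem_affineSpan_of_mem_openSegment hp hx))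
    (notMem_affineSpan_insert_of_mem_openSegment hp hx hy)

end OpenSegment

section ConvexHullCuts

variable {E : Type*} [AddCommGroup E] [Module ℝ E]

theorem convexHull_insert_of_mem_convexHull {S : Set E} {v : E} (hv : v ∈ convexHull ℝ S) :
    convexHull ℝ (insert v S) = convexHull ℝ S :=
  Subset.antisymm
    (convexHull_min (insert_subset hv (subset_convexHull ℝ S)) (convex_convexHull ℝ S))
    (convexHull_mono (subset_insert v S))

theorem segment_union_segment {x y p : E} (hp : p ∈ segment ℝ x y) :
    segment ℝ x p ∪ segment ℝ y p = segment ℝ x y := by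
  rw [segment_eq_image_lineMap] at hp
  obtain ⟨t, ⟨ht₀, ht₁⟩, rfl⟩ := hp
  have hl : segment ℝ x (AffineMap.lineMap x y t) = AffineMap.lineMap x y '' Icc 0 t := by
    rw [← segment_eq_Icc ht₀, image_segment, AffineMap.lineMap_apply_zero]
  have hr : segment ℝ y (AffineMap.lineMap x y t) = AffineMap.lineMap x y '' Icc t 1 := by
    rw [segment_symm, ← segment_eq_Icc ht₁, image_segment, AffineMap.lineMap_apply_one]
  rw [hl, hr, ← image_union, Icc_union_Icc_eq_Icc ht₀ ht₁, segment_eq_image_lineMap]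

theorem convexHull_insert_union_convexHull_insert {x y p : E} (hp : p ∈ segment ℝ x y)
    (R : Set E) : convexHull ℝ (insert x (insert p R)) ∪ convexHull ℝ (insert y (insert p R)) =
      convexHull ℝ (insert x (insert y R)) := by
  rcases R.eq_empty_or_nonempty with rfl | hR
  · simp only [insert_empty_eq, convexHull_pair, segment_union_segment hp]
  have hull_pair (a b : E) : convexHull ℝ (insert a (insert b R)) =
      convexJoin ℝ (segment ℝ a b) (convexHull ℝ R) := by
    rw [← convexHull_pair, ← convexHull_union (insert_nonempty _ _) hR, insert_union,
      singleton_union]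
  simp only [hull_pair, ← convexJoin_union_left, segment_union_segment hp]

theorem convexHull_insert_inter_convexHull_insert {T : Set E} {f : E →ᵃ[ℝ] ℝ}
    (hT : T.Nonempty) (hfT : ∀ t ∈ T, f t = 0) {x y : E} (hx : 0 < f x) (hy : f y < 0) :
    convexHull ℝ (insert x T) ∩ convexHull ℝ (insert y T) = convexHull ℝ T := by
  refine Subset.antisymm ?_ (subset_inter (convexHull_mono (subset_insert x T))
    (convexHull_mono (subset_insert y T)))
  have apply_lineMap {v k : E} (hk : k ∈ convexHull ℝ T) (t : ℝ) :
      f (AffineMap.lineMap k v t) = t * f v := by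
    have hfk := affineMap_eq_zero_of_mem_affineSpan hfT (convexHull_subset_affineSpan T hk)
    rw [AffineMap.apply_lineMap, hfk, AffineMap.lineMap_apply, vsub_eq_sub, vadd_eq_add,
      sub_zero, add_zero, smul_eq_mul]
  have mem_lineMap {v z : E} (hz : z ∈ convexHull ℝ (insert v T)) :
      ∃ k ∈ convexHull ℝ T, ∃ t ∈ Icc (0 : ℝ) 1, AffineMap.lineMap k v t = z := by
    rw [convexHull_insert hT, mem_convexJoin] at hz
    obtain ⟨_, rfl, k, hk, hzk⟩ := hz
    rw [segment_symm, segment_eq_image_lineMap] at hzk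
    exact ⟨k, hk, hzk⟩
  rintro z ⟨hzx, hzy⟩
  obtain ⟨k, hk, t, ht, rfl⟩ := mem_lineMap hzx
  obtain ⟨l, hl, s, hs, hz⟩ := mem_lineMap hzy
  have hfz := congrArg f hz
  rw [apply_lineMap hl, apply_lineMap hk] at hfz
  have ht₀ : t = 0 := by nlinarith [ht.1, hs.1, mul_nonneg hs.1 (neg_nonneg.2 hy.le)]
  rwa [ht₀, AffineMap.lineMap_apply_zero]

theorem convex_setOf_mem_segment (v z : E) : Convex ℝ {c | z ∈ segment ℝ v c} := by
  simp only [mem_segment_iff_wbtw, wbtw_iff_left_eq_or_right_mem_image_Ici]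
  by_cases hvz : v = z
  · simpa only [hvz, true_or, ofPred_true] using convex_univ
  · simpa only [hvz, false_or, ofPred_mem_eq] using (convex_Ici 1).affine_image _

theorem convexHull_insert_union {A B : Set E} (v : E) (hA : Convex ℝ A) (hB : Convex ℝ B)
    (hAB : Convex ℝ (A ∪ B)) (hA₀ : A.Nonempty) (hB₀ : B.Nonempty) :
    convexHull ℝ (insert v (A ∪ B)) = convexHull ℝ (insert v A) ∪ convexHull ℝ (insert v B) := by
  rw [convexHull_insert hA₀, convexHull_insert hB₀, convexHull_insert (hA₀.mono subset_union_left),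
    hA.convexHull_eq, hB.convexHull_eq, hAB.convexHull_eq, convexJoin_union_right]

theorem convexHull_insert_inter [TopologicalSpace E] [ContinuousAdd E] [ContinuousSMul ℝ E]
    {A B : Set E} (v : E) (hA : Convex ℝ A) (hB : Convex ℝ B) (hAB : Convex ℝ (A ∪ B))
    (hA' : IsClosed A) (hB' : IsClosed B) (hne : (A ∩ B).Nonempty) :
    convexHull ℝ (insert v (A ∩ B)) = convexHull ℝ (insert v A) ∩ convexHull ℝ (insert v B) := by
  refine Subset.antisymm (subset_inter (convexHull_mono (insert_subset_insert inter_subset_left))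
    (convexHull_mono (insert_subset_insert inter_subset_right))) ?_
  rw [convexHull_insert hne, convexHull_insert hne.left, convexHull_insert hne.right,
    hA.convexHull_eq, hB.convexHull_eq, (hA.inter hB).convexHull_eq]
  rintro z ⟨hzA, hzB⟩
  simp only [mem_convexJoin, mem_singleton_iff, exists_eq_left] at hzA hzB ⊢
  obtain ⟨a, ha, hza⟩ := hzA
  obtain ⟨b, hb, hzb⟩ := hzB
  obtain ⟨c, hc, hcAB⟩ := isPreconnected_closed_iff.1 (convex_segment a b).isPreconnected A B
    hA' hB' (hAB.segment_subset (.inl ha) (.inr hb)) ⟨a, left_mem_segment ℝ a b, ha⟩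
    ⟨b, right_mem_segment ℝ a b, hb⟩
  exact ⟨c, hcAB, (convex_setOf_mem_segment v z).segment_subset hza hzb hc⟩

end ConvexHullCuts

section Polytope

variable {n : ℕ} {Q : Set (En n)}

theorem isPolytope_convexHull {S : Set (En n)} (hS : S.Finite) (hne : S.Nonempty) :
    IsPolytope (convexHull ℝ S) :=
  ⟨hS.toFinset, hS.toFinset_nonempty.2 hne, by rw [hS.coe_toFinset]⟩

theorem IsPolytope.convex (hQ : IsPolytope Q) : Convex ℝ Q := by
  obtain ⟨S, -, rfl⟩ := hQ
  exact convex_convexHull ℝ _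

theorem IsPolytope.isCompact (hQ : IsPolytope Q) : IsCompact Q := by
  obtain ⟨S, -, rfl⟩ := hQ
  exact S.finite_toSet.isCompact_convexHull ℝ

theorem IsPolytope.nonempty (hQ : IsPolytope Q) : Q.Nonempty := by
  obtain ⟨S, hS, rfl⟩ := hQ
  exact convexHull_nonempty_iff.2 hS

theorem IsPolytope.convexHull_insert (hQ : IsPolytope Q) (v : En n) :
    IsPolytope (convexHull ℝ (insert v Q)) := by
  obtain ⟨S, -, rfl⟩ := hQ
  rw [insert_eq, convexHull_convexHull_union_right, ← insert_eq]
  exact isPolytope_convexHull (S.finite_toSet.insert v) (insert_nonempty v _)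

end Polytope

namespace IsPolyValuation

variable {n : ℕ} {Y : Set (En n) → En n}

theorem convexHull_insert (hY : IsPolyValuation Y) (v : En n) :
    IsPolyValuation fun Q => Y (convexHull ℝ (insert v Q)) := by
  intro A B hA hB hAB hAB'
  have hunion :=
    convexHull_insert_union v hA.convex hB.convex hAB.convex hA.nonempty hB.nonempty
  have hinter := convexHull_insert_inter v hA.convex hB.convex hAB.convex
    hA.isCompact.isClosed hB.isCompact.isClosed hAB'.nonempty
  have := hY _ _ (hA.convexHull_insert v) (hB.convexHull_insert v)
    (hunion ▸ hAB.convexHull_insert v) (hinter ▸ hAB'.convexHull_insert v)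
  rwa [← hunion, ← hinter] at this

theorem add_of_mem_openSegment (hY : IsPolyValuation Y) {R : Set (En n)} (hR : R.Finite)
    {x y p : En n} (hp : p ∈ openSegment ℝ x y) (hx : x ∉ affineSpan ℝ (insert p R)) :
    Y (convexHull ℝ (insert x (insert p R))) + Y (convexHull ℝ (insert y (insert p R))) =
      Y (convexHull ℝ (insert x (insert y R))) + Y (convexHull ℝ (insert p R)) := by
  obtain ⟨f, hfx, hf⟩ := exists_affineMap_eq_one_eq_zero (insert_nonempty p R) hx
  have hfy : f y < 0 := by
    rw [openSegment_eq_image_lineMap] at hp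
    obtain ⟨t, ht, rfl⟩ := hp
    have hfp := hf _ (mem_insert _ R)
    rw [AffineMap.apply_lineMap, hfx, AffineMap.lineMap_apply_module, smul_eq_mul, smul_eq_mul]
      at hfp
    nlinarith [ht.1, ht.2]
  have hunion := convexHull_insert_union_convexHull_insert (openSegment_subset_segment ℝ x y hp) R
  have hinter := convexHull_insert_inter_convexHull_insert (insert_nonempty p R) hf
    (hfx ▸ one_pos) hfy
  rw [← hunion, ← hinter]
  refine hY _ _ ?_ ?_ (hunion ▸ ?_) (hinter ▸ ?_) <;>
    exact isPolytope_convexHull (by simp only [finite_insert, hR]) (insert_nonempty _ _)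

end IsPolyValuation

section VanishingOnSimplices

variable {n : ℕ} {Y : Set (En n) → En n}

theorem IsPolyValuation.eq_zero_of_lineMap (hY : IsPolyValuation Y) {R : Set (En n)}
    (hR : R.Finite) {x q : En n} (hx : x ∉ affineSpan ℝ R) (hq : q ∈ affineSpan ℝ R) {t : ℝ}
    (ht : t < 0) (hR₀ : Y (convexHull ℝ (insert q R)) = 0)
    (hR₁ : ∀ v ∉ affineSpan ℝ R, Y (convexHull ℝ (insert q (insert v R))) = 0) :
    Y (convexHull ℝ (insert (AffineMap.lineMap q x t) (insert x R))) = 0 := by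
  have hv := (AffineSubspace.sOppSide_lineMap_left hq hx ht).left_notMem
  have hqxv : q ∈ openSegment ℝ x (AffineMap.lineMap q x t) := by
    refine ⟨-t / (1 - t), 1 / (1 - t), div_pos (by linarith) (by linarith),
      div_pos one_pos (by linarith), by field [show 1 - t ≠ 0 by linarith], ?_⟩
    rw [AffineMap.lineMap_apply_module]
    match_scalars <;> field [show 1 - t ≠ 0 by linarith]
  have hcut := hY.add_of_mem_openSegment hR hqxv
    (by rwa [affineSpan_insert_eq_affineSpan ℝ hq])
  rwa [insert_comm x q, insert_comm _ q, hR₁ _ hx, hR₁ _ hv, hR₀, add_zero, add_zero,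
    insert_comm x, eq_comm] at hcut

/- Negative weights are removed one at a time: if `x` has negative weight in `v`, the edge `[v, x]`
crosses the hyperplane spanned by the other vertices in a point `q` without this weight. -/
theorem IsPolyValuation.eq_zero_of_sum_smul (hY : IsPolyValuation Y)
    (hsimplex : ∀ T : Set (En n), T.Nonempty → AffineIndependent ℝ ((↑) : T → En n) →
      Y (convexHull ℝ T) = 0)
    {T : Set (En n)} (hT : AffineIndependent ℝ ((↑) : T → En n)) {S : Finset (En n)}
    (hST : (S : Set (En n)) ⊆ T) {a : En n → ℝ} (ha : ∑ y ∈ S, a y = 1) :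
    Y (convexHull ℝ (insert (∑ y ∈ S, a y • y) T)) = 0 := by
  classical
  induction S using Finset.strongInduction generalizing T a with
  | H S ih =>
  by_cases hneg : ∀ y ∈ S, 0 ≤ a y
  · rw [convexHull_insert_of_mem_convexHull ((convex_convexHull ℝ _).sum_mem hneg ha
      fun y hy => subset_convexHull ℝ _ (hST hy))]
    exact hsimplex T ((Finset.coe_nonempty.2
      (Finset.nonempty_of_sum_ne_zero (ha.trans_ne one_ne_zero))).mono hST) hT
  push Not at hneg
  obtain ⟨x, hxS, hax⟩ := hneg
  have hax₁ : 0 < 1 - a x := by linarith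
  obtain ⟨U, hxU, rfl⟩ : ∃ U, x ∉ U ∧ insert x U = T :=
    ⟨T \ {x}, notMem_sdiff_of_mem (mem_singleton x), insert_sdiff_self_of_mem (hST hxS)⟩
  have hRU : (S.erase x : Set (En n)) ⊆ U := fun y hy =>
    (hST (Finset.mem_of_mem_erase hy)).resolve_left (Finset.ne_of_mem_erase hy)
  have hR : ∑ y ∈ S.erase x, a y / (1 - a x) = 1 := by
    rw [← Finset.sum_div, div_eq_one_iff_eq hax₁.ne', ← ha, ← Finset.add_sum_erase S a hxS,
      add_sub_cancel_left]
  have hlt := Finset.erase_ssubset hxS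
  have hU : AffineIndependent ℝ ((↑) : U → En n) := hT.mono (subset_insert x U)
  have hUfin : U.Finite := finite_set_of_fin_dim_affineIndependent ℝ hU
  rw [← lineMap_sum_erase_smul hxS (by linarith)]
  exact hY.eq_zero_of_lineMap hUfin (notMem_affineSpan_of_insert hxU hT)
    (affineSpan_mono ℝ hRU (sum_smul_mem_affineSpan hR)) hax (ih _ hlt hU hRU hR) fun v hv =>
      ih _ hlt (affineIndependent_insert hU hv) (hRU.trans (subset_insert v U)) hR

theorem IsPolyValuation.eq_zero_of_forall_simplex (hY : IsPolyValuation Y)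
    (hsimplex : ∀ T : Set (En n), T.Nonempty → AffineIndependent ℝ ((↑) : T → En n) →
      Y (convexHull ℝ T) = 0)
    {Q : Set (En n)} (hQ : IsPolytope Q) : Y Q = 0 := by
  obtain ⟨S, hS, rfl⟩ := hQ
  induction hS using Finset.Nonempty.cons_induction generalizing Y with
  | singleton x =>
    rw [Finset.coe_singleton]
    exact hsimplex _ (singleton_nonempty x) (affineIndependent_of_subsingleton ℝ _)
  | cons v S _ _ ih =>
    rw [Finset.coe_cons, insert_eq, ← convexHull_convexHull_union_right, ← insert_eq]
    refine ih (hY.convexHull_insert v) fun T _ hT => ?_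
    rw [insert_eq, convexHull_convexHull_union_right, ← insert_eq]
    by_cases hv : v ∈ affineSpan ℝ T
    · obtain ⟨T, rfl⟩ := (finite_set_of_fin_dim_affineIndependent ℝ hT).exists_finset_coe
      obtain ⟨a, ha, rfl⟩ := exists_sum_smul_eq_of_mem_affineSpan hv
      exact hY.eq_zero_of_sum_smul hsimplex hT Subset.rfl ha
    · exact hsimplex _ (insert_nonempty v T) (affineIndependent_insert hT hv)

end VanishingOnSimplices

section Simple

variable {n : ℕ} {Y : Set (En n) → En n}

/-- `Y` is simple: it vanishes on the polytopes that are not full-dimensional. -/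
def IsPolySimple {n : ℕ} (Y : Set (En n) → En n) : Prop :=
  ∀ Q : Set (En n), IsPolytope Q → Module.finrank ℝ (vectorSpan ℝ Q) ≤ n - 1 → Y Q = 0

theorem IsPolySimple.eq_zero (hY : IsPolySimple Y) {S : Set (En n)} (hS : S.Finite)
    (hne : S.Nonempty) (hspan : affineSpan ℝ S ≠ ⊤) : Y (convexHull ℝ S) = 0 := by
  refine hY _ (isPolytope_convexHull hS hne) (Nat.le_sub_one_of_lt ?_)
  rw [← direction_affineSpan, affineSpan_convexHull]
  have hdir := mt (AffineSubspace.direction_eq_top_iff_of_nonempty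
    (hne.mono (subset_affineSpan ℝ S))).1 hspan
  exact (Submodule.finrank_lt hdir).trans_eq finrank_euclideanSpace_fin

theorem IsPolyValuation.eq_add_of_mem_openSegment (hY : IsPolyValuation Y) (hs : IsPolySimple Y)
    {R : Set (En n)} (hR : R.Finite) {x y p : En n} (hp : p ∈ openSegment ℝ x y)
    (hx : x ∉ affineSpan ℝ (insert p R)) :
    Y (convexHull ℝ (insert x (insert y R))) =
      Y (convexHull ℝ (insert x (insert p R))) + Y (convexHull ℝ (insert y (insert p R))) := by
  rw [hY.add_of_mem_openSegment hR hp hx, hs.eq_zero (hR.insert p) (insert_nonempty p R)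
    fun h => hx (h ▸ AffineSubspace.mem_top ℝ _ x), add_zero]

theorem IsPolyValuation.eq_zero_of_mem_openSegment_zero (hY : IsPolyValuation Y)
    (hs : IsPolySimple Y)
    (h₀ : ∀ T : Set (En n), AffineIndependent ℝ ((↑) : T → En n) → 0 ∈ T → Y (convexHull ℝ T) = 0)
    {R : Set (En n)} (hR : AffineIndependent ℝ ((↑) : R → En n)) {x y : En n}
    (hxy : x ∈ openSegment ℝ y 0) (hx : x ∉ affineSpan ℝ (insert y R))
    (hy : y ∉ affineSpan ℝ (insert x R)) : Y (convexHull ℝ (insert x (insert y R))) = 0 := by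
  have hzero {v : En n} (hvR : v ∉ affineSpan ℝ R) (hv : 0 ∉ affineSpan ℝ (insert v R)) :
      Y (convexHull ℝ (insert 0 (insert v R))) = 0 :=
    h₀ _ (affineIndependent_insert (affineIndependent_insert hR hvR) hv) (mem_insert 0 _)
  have h0y : 0 ∉ affineSpan ℝ (insert y R) := fun h => hx
    ((affineSpan ℝ (insert y R)).convex.openSegment_subset
      (subset_affineSpan ℝ _ (mem_insert y R)) h hxy)
  have h0x : 0 ∉ affineSpan ℝ (insert x R) :=
    notMem_of_mem_openSegment hxy (subset_affineSpan ℝ _ (mem_insert x R)) hy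
  have hcut := hY.eq_add_of_mem_openSegment hs (finite_set_of_fin_dim_affineIndependent ℝ hR) hxy hy
  rwa [insert_comm y 0, insert_comm y x,
    hzero (mt (affineSpan_mono ℝ (subset_insert x R) ·) hy) h0y,
    hzero (mt (affineSpan_mono ℝ (subset_insert y R) ·) hx) h0x, add_zero, eq_comm] at hcut

theorem IsPolyValuation.eq_zero_of_pairwise_mul_nonpos (hY : IsPolyValuation Y)
    (hs : IsPolySimple Y)
    (h₀ : ∀ T : Set (En n), AffineIndependent ℝ ((↑) : T → En n) → 0 ∈ T → Y (convexHull ℝ T) = 0)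
    {T : Set (En n)} (hT : AffineIndependent ℝ ((↑) : T → En n)) {S : Finset (En n)}
    (hST : (S : Set (En n)) ⊆ T) {a : En n → ℝ} (ha : ∑ y ∈ S, a y = 1)
    (haS : ∑ y ∈ S, a y • y = 0)
    (hneg : (S : Set (En n)).Pairwise fun x y => a x * a y ≤ 0) : Y (convexHull ℝ T) = 0 := by
  obtain ⟨x, hxS, hax⟩ : ∃ x ∈ S, 0 < a x :=
    Finset.exists_lt_of_sum_lt (by simp only [Finset.sum_const_zero, ha, one_pos])
  have hnonpos {z : En n} (hz : z ∈ S) (hzx : z ≠ x) : a z ≤ 0 :=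
    nonpos_of_mul_nonpos_right (hneg hxS hz hzx.symm) hax
  by_cases hy : ∃ y ∈ S, a y < 0
  · obtain ⟨y, hyS, hay⟩ := hy
    have hxy : x ≠ y := fun h => hax.not_gt (h ▸ hay)
    have hzero (z : En n) (hz : z ∈ S) (hzxy : z ≠ x ∧ z ≠ y) : a z = 0 :=
      (hnonpos hz hzxy.1).antisymm (nonneg_of_mul_nonpos_right (hneg hyS hz hzxy.2.symm) hay)
    rw [Finset.sum_eq_add x y hxy hzero (absurd hxS) (absurd hyS)] at ha
    rw [Finset.sum_eq_add x y hxy (fun z hz h => by rw [hzero z hz h, zero_smul]) (absurd hxS)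
      (absurd hyS)] at haS
    obtain ⟨R, rfl, hR, hx, hy⟩ :=
      exists_insert_insert_eq_of_affineIndependent hT (hST hxS) (hST hyS) hxy
    refine hY.eq_zero_of_mem_openSegment_zero hs h₀ hR
      ⟨-a y / a x, 1 / a x, div_pos (neg_pos.2 hay) hax, div_pos one_pos hax, ?_, ?_⟩ hx hy
    · rw [← add_div, div_eq_one_iff_eq hax.ne', ← ha]
      ring
    · rw [smul_zero, add_zero, div_eq_inv_mul, mul_smul, neg_smul, ← eq_neg_of_add_eq_zero_left haS,
        inv_smul_smul₀ hax.ne']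
  · push Not at hy
    have hzero (z : En n) (hz : z ∈ S) (hzx : z ≠ x) : a z = 0 :=
      (hnonpos hz hzx).antisymm (hy z hz)
    rw [Finset.sum_eq_single x hzero (absurd hxS)] at ha
    rw [Finset.sum_eq_single x (fun z hz h => by rw [hzero z hz h, zero_smul]) (absurd hxS), ha,
      one_smul] at haS
    exact h₀ T hT (haS ▸ hST hxS)

/- Two vertices with weights of the same sign are merged by cutting the simplex at the point of
their edge that carries the sum of the two weights. -/
theorem IsPolyValuation.eq_zero_of_sum_smul_eq_zero (hY : IsPolyValuation Y) (hs : IsPolySimple Y)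
    (h₀ : ∀ T : Set (En n), AffineIndependent ℝ ((↑) : T → En n) → 0 ∈ T → Y (convexHull ℝ T) = 0)
    {T : Set (En n)} (hT : AffineIndependent ℝ ((↑) : T → En n)) {S : Finset (En n)}
    (hST : (S : Set (En n)) ⊆ T) {a : En n → ℝ} (ha : ∑ y ∈ S, a y = 1)
    (haS : ∑ y ∈ S, a y • y = 0) : Y (convexHull ℝ T) = 0 := by
  classical
  induction hk : S.card using Nat.strong_induction_on generalizing S T a with
  | _ k ih =>
  subst hk
  by_cases hpos : ∃ x ∈ S, ∃ y ∈ S, x ≠ y ∧ 0 < a x * a y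
  · obtain ⟨x, hxS, y, hyS, hxy, hpos⟩ := hpos
    have hyS' : y ∈ S.erase x := Finset.mem_erase.2 ⟨hxy.symm, hyS⟩
    obtain ⟨R, rfl, hR, hx, hy⟩ :=
      exists_insert_insert_eq_of_affineIndependent hT (hST hxS) (hST hyS) hxy
    obtain ⟨p, hp, hpa⟩ := exists_mem_openSegment_smul_eq hpos x y
    have hSR : ((S.erase x).erase y : Set (En n)) ⊆ R := fun z hz => by
      simp only [Finset.coe_erase, Set.mem_sdiff, mem_singleton_iff] at hz
      exact ((hST hz.1.1).resolve_left hz.1.2).resolve_left hz.2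
    have hpS : p ∉ (S.erase x).erase y := fun h =>
      notMem_affineSpan_of_mem_openSegment hp hx (subset_affineSpan ℝ R (hSR h))
    obtain ⟨b, hb, hbS⟩ := exists_sum_smul_insert_erase_erase a hxS hyS' hpS hpa
    have hpiece {v : En n} (hv : AffineIndependent ℝ ((↑) : ↥(insert v (insert p R)) → En n)) :
        Y (convexHull ℝ (insert v (insert p R))) = 0 := by
      refine ih _ (card_insert_erase_erase_lt hxS hyS' p) hv ?_ (hb.trans ha) (hbS.trans haS) rfl
      rw [Finset.coe_insert]
      exact (insert_subset_insert hSR).trans (subset_insert v _)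
    rw [hY.eq_add_of_mem_openSegment hs (finite_set_of_fin_dim_affineIndependent ℝ hR) hp
        (notMem_affineSpan_insert_of_mem_openSegment hp hx hy),
      hpiece (affineIndependent_insert_of_mem_openSegment hR hp hx hy),
      hpiece (affineIndependent_insert_of_mem_openSegment hR (openSegment_symm ℝ x y ▸ hp) hy hx),
      add_zero]
  · push Not at hpos
    exact hY.eq_zero_of_pairwise_mul_nonpos hs h₀ hT hST ha haS fun x hx y hy => hpos x hx y hy

theorem IsPolyValuation.eq_zero_of_forall_simplex_zero_mem (hY : IsPolyValuation Y)
    (hs : IsPolySimple Y)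
    (h₀ : ∀ T : Set (En n), AffineIndependent ℝ ((↑) : T → En n) → 0 ∈ T → Y (convexHull ℝ T) = 0)
    {Q : Set (En n)} (hQ : IsPolytope Q) : Y Q = 0 := by
  refine hY.eq_zero_of_forall_simplex (fun T hTne hT => ?_) hQ
  obtain ⟨T, rfl⟩ := (finite_set_of_fin_dim_affineIndependent ℝ hT).exists_finset_coe
  by_cases hspan : affineSpan ℝ (T : Set (En n)) = ⊤
  · obtain ⟨a, ha, haT⟩ := exists_sum_smul_eq_of_mem_affineSpan
      (hspan ▸ AffineSubspace.mem_top ℝ _ (0 : En n))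
    exact hY.eq_zero_of_sum_smul_eq_zero hs h₀ hT Subset.rfl ha haT
  · exact hs.eq_zero T.finite_toSet hTne hspan

end Simple

section FunctionalEquation

theorem eq_mul_of_add {h : ℝ → ℝ} (hc : Continuous h) (h₀ : h 0 = 0)
    (hadd : ∀ x y, 0 < x → 0 < y → h (x + y) = h x + h y) {t : ℝ} (ht : 0 ≤ t) :
    h t = t * h 1 := by
  have hadd' (x y : ℝ) (hx : 0 ≤ x) (hy : 0 ≤ y) : h (x + y) = h x + h y := by
    rcases hx.eq_or_lt with rfl | hx
    · rw [zero_add, h₀, zero_add]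
    rcases hy.eq_or_lt with rfl | hy
    · rw [add_zero, h₀, add_zero]
    exact hadd x y hx hy
  let H : ℝ →+ ℝ := AddMonoidHom.mk' (fun x => h x⁺ - h x⁻) fun x y => by
    have hsum : (x + y)⁺ + (x⁻ + y⁻) = (x + y)⁻ + (x⁺ + y⁺) := by
      linarith [posPart_sub_negPart x, posPart_sub_negPart y, posPart_sub_negPart (x + y)]
    have h_hsum := congrArg h hsum
    rw [hadd' _ _ (posPart_nonneg _) (add_nonneg (negPart_nonneg _) (negPart_nonneg _)),
      hadd' _ _ (negPart_nonneg _) (add_nonneg (posPart_nonneg _) (posPart_nonneg _)),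
      hadd' _ _ (negPart_nonneg _) (negPart_nonneg _),
      hadd' _ _ (posPart_nonneg _) (posPart_nonneg _)] at h_hsum
    linarith
  have hH : Continuous H := by
    change Continuous fun x : ℝ => h x⁺ - h x⁻
    simp only [posPart_def, negPart_def]
    fun_prop
  have h_apply {x : ℝ} (hx : 0 ≤ x) : H x = h x := by
    change h x⁺ - h x⁻ = h x
    rw [posPart_eq_self.2 hx, negPart_eq_zero.2 hx, h₀, sub_zero]
  rw [← h_apply ht, ← h_apply zero_le_one, ← smul_eq_mul, ← map_real_smul H hH, smul_eq_mul,
    mul_one]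

/- Adding the two equations shows that `α + β` is additive, and then subtracting them shows that
`t ↦ t * (α t - β t)` is additive as well; continuity of `α - β` at `0` makes its slope vanish. -/
theorem eq_mul_of_simplex_cut_eq {α β : ℝ → ℝ} (hα : Continuous α) (hβ : Continuous β)
    (hα₀ : α 0 = 0) (hβ₀ : β 0 = 0)
    (hcutα : ∀ x y, 0 < x → 0 < y →
      (x + y) * α (x + y) = (x + y) * α x + y * (β x + α y))
    (hcutβ : ∀ x y, 0 < x → 0 < y →
      (x + y) * β (x + y) = (x + y) * β y + x * (β x + α y)) {t : ℝ} (ht : 0 ≤ t) :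
    α t = t * α 1 ∧ β t = t * α 1 := by
  have hadd {s : ℝ} (hs : 0 ≤ s) : α s + β s = s * (α 1 + β 1) := by
    refine eq_mul_of_add (h := fun t => α t + β t) (hα.add hβ) (by simp only [hα₀, hβ₀, add_zero])
      (fun x y hx hy => mul_left_cancel₀ (add_pos hx hy).ne' ?_) hs
    linarith [hcutα x y hx hy, hcutβ x y hx hy]
  have hsub {s : ℝ} (hs : 0 ≤ s) : s * (α s - β s) = s * (α 1 - β 1) := by
    have := eq_mul_of_add (h := fun t => t * (α t - β t)) (continuous_id.mul (hα.sub hβ))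
      (zero_mul _) (fun x y hx hy => ?_) hs
    · rwa [one_mul] at this
    have hxy : y * (α x + β x) = x * (α y + β y) := by
      rw [hadd hx.le, hadd hy.le, mul_left_comm]
    linarith [hcutα x y hx hy, hcutβ x y hx hy]
  have hslope : α 1 - β 1 = 0 := by
    have hlim : Tendsto (fun s => α s - β s) (𝓝[>] 0) (𝓝 0) := by
      have := (hα.sub hβ).tendsto 0
      rw [Pi.sub_apply, hα₀, hβ₀, sub_zero] at this
      exact this.mono_left nhdsWithin_le_nhds
    refine tendsto_nhds_unique (tendsto_const_nhds.congr' ?_) hlim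
    filter_upwards [self_mem_nhdsWithin] with s hs
    exact (mul_left_cancel₀ hs.ne' (hsub hs.le)).symm
  have heq : α t = β t := by
    rcases ht.eq_or_lt with rfl | ht
    · rw [hα₀, hβ₀]
    · have := mul_left_cancel₀ ht.ne' (hsub ht.le)
      linarith
  have hsum := hadd ht
  rw [← sub_eq_zero.1 hslope] at hsum
  constructor <;> linarith

end FunctionalEquation

section OriginSimplex

variable {n : ℕ} {Y : Set (En n) → En n}

/-- The determinant of the matrix with columns `v 0, …, v (n - 1)`. -/
def columnDet {n : ℕ} : En n [⋀^Fin n]→ₗ[ℝ] ℝ := (EuclideanSpace.basisFun (Fin n) ℝ).toBasis.det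

/-- The (possibly degenerate) simplex with vertices `0` and the `v i`. -/
def originSimplex {n : ℕ} (v : Fin n → En n) : Set (En n) := convexHull ℝ (insert 0 (range v))

theorem isPolytope_originSimplex (v : Fin n → En n) : IsPolytope (originSimplex v) :=
  isPolytope_convexHull ((finite_range v).insert 0) (insert_nonempty 0 _)

theorem image_originSimplex (L : En n →ₗ[ℝ] En n) (v : Fin n → En n) :
    L '' originSimplex v = originSimplex (L ∘ v) := by
  rw [originSimplex, L.image_convexHull, image_insert_eq, map_zero, ← range_comp, originSimplex]

theorem columnDet_ne_zero_iff_span_eq_top {v : Fin n → En n} :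
    columnDet v ≠ 0 ↔ Submodule.span ℝ (range v) = ⊤ := by
  rw [← isUnit_iff_ne_zero, columnDet, ← Module.Basis.is_basis_iff_det, and_iff_right_iff_imp]
  exact fun h => linearIndependent_of_top_le_span_of_card_eq_finrank h.ge
    ((Fintype.card_fin n).trans finrank_euclideanSpace_fin.symm)

theorem linearIndependent_of_columnDet_ne_zero {v : Fin n → En n} (hv : columnDet v ≠ 0) :
    LinearIndependent ℝ v :=
  ((EuclideanSpace.basisFun (Fin n) ℝ).toBasis.is_basis_iff_det.2 (isUnit_iff_ne_zero.2 hv)).1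

theorem affineSpan_insert_zero_range_eq_top_iff {v : Fin n → En n} :
    affineSpan ℝ (insert 0 (range v)) = ⊤ ↔ columnDet v ≠ 0 := by
  rw [columnDet_ne_zero_iff_span_eq_top, ← SetLike.coe_set_eq, affineSpan_insert_zero,
    AffineSubspace.top_coe, ← Submodule.top_coe (R := ℝ), SetLike.coe_set_eq]

theorem IsPolySLCovariant.apply_image (hY : IsPolySLCovariant Y) {Q : Set (En n)}
    (hQ : IsPolytope Q) {L : En n →ₗ[ℝ] En n} (hL : LinearMap.det L = 1) :
    Y (L '' Q) = L (Y Q) := by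
  obtain ⟨ϑ, rfl⟩ := Matrix.toEuclideanLin.surjective L
  refine hY Q hQ ϑ ?_
  rwa [Matrix.toEuclideanLin_eq_toLin_orthonormal, LinearMap.det_toLin] at hL

theorem IsPolySLCovariant.exists_apply_originSimplex (hY : IsPolySLCovariant Y)
    (hs : IsPolySimple Y) (d : ℝ) : ∃ a : Fin n → ℝ, (d = 0 → a = 0) ∧
      ∀ v : Fin n → En n, columnDet v = d → Y (originSimplex v) = ∑ k, a k • v k := by
  by_cases hd : d = 0
  · refine ⟨0, fun _ => rfl, fun v hv => ?_⟩
    simp only [Pi.zero_apply, zero_smul, Finset.sum_const_zero]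
    exact hs.eq_zero ((finite_range v).insert 0) (insert_nonempty 0 _)
      fun h => affineSpan_insert_zero_range_eq_top_iff.1 h (hv.trans hd)
  by_cases hw : ∃ w : Fin n → En n, columnDet w = d
  · obtain ⟨w, rfl⟩ := hw
    obtain ⟨hwi, hws⟩ := Module.Basis.is_basis_iff_det _ |>.2 (isUnit_iff_ne_zero.2 hd)
    let b := Module.Basis.mk hwi hws.ge
    refine ⟨b.equivFun (Y (originSimplex w)), fun h => absurd h hd, fun v hv => ?_⟩
    have hbw : (b.constr ℝ v : En n → En n) ∘ w = v := funext fun i => by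
      rw [Function.comp_apply, ← Module.Basis.mk_apply hwi hws.ge, b.constr_basis]
    have hdet : LinearMap.det (b.constr ℝ v) = 1 := by
      have := Module.Basis.det_comp (EuclideanSpace.basisFun (Fin n) ℝ).toBasis (b.constr ℝ v) w
      rw [hbw] at this
      exact mul_right_cancel₀ hd (this.symm.trans (hv.trans (one_mul _).symm))
    have := hY.apply_image (isPolytope_originSimplex w) hdet
    rwa [image_originSimplex, hbw, b.constr_apply_fintype ℝ] at this
  · exact ⟨0, fun h => absurd h hd, fun v hv => (hw ⟨v, hv⟩).elim⟩

end OriginSimplex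

section Continuity

theorem exists_mem_convexHull_dist_le {E : Type*} [NormedAddCommGroup E] [NormedSpace ℝ E]
    {S T : Set E} (hT : T.Finite) {r : ℝ} (hr : 0 ≤ r) (h : ∀ x ∈ S, ∃ y ∈ T, dist x y ≤ r) {x : E}
    (hx : x ∈ convexHull ℝ S) : ∃ y ∈ convexHull ℝ T, dist x y ≤ r := by
  have hsub : convexHull ℝ S ⊆ Metric.cthickening r (convexHull ℝ T) := by
    refine convexHull_min (fun z hz => ?_) ((convex_convexHull ℝ T).cthickening r)
    obtain ⟨y, hy, hzy⟩ := h z hz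
    exact Metric.mem_cthickening_of_dist_le z y r _ (subset_convexHull ℝ T hy) hzy
  rw [(hT.isCompact_convexHull ℝ).cthickening_eq_biUnion_closedBall hr] at hsub
  simpa only [mem_iUnion, Metric.mem_closedBall, exists_prop] using hsub hx

variable {n : ℕ} {Y : Set (En n) → En n}

/-- A polytope as a point of the space of polytopes. -/
def IsPolytope.toPolySp {n : ℕ} {Q : Set (En n)} (hQ : IsPolytope Q) : PolySp n :=
  ⟨⟨⟨Q, hQ.isCompact⟩, hQ.nonempty⟩, hQ⟩

theorem hausdorffDist_originSimplex_le (v w : Fin n → En n) :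
    Metric.hausdorffDist (originSimplex v) (originSimplex w) ≤ dist v w := by
  have hnear (v w : Fin n → En n) (x : En n) (hx : x ∈ originSimplex v) :
      ∃ y ∈ originSimplex w, dist x y ≤ dist v w := by
    refine exists_mem_convexHull_dist_le ((finite_range w).insert 0) dist_nonneg ?_ hx
    rintro _ (rfl | ⟨k, rfl⟩)
    · exact ⟨0, mem_insert 0 _, (dist_self (0 : En n)).trans_le dist_nonneg⟩
    · exact ⟨w k, mem_insert_of_mem 0 (mem_range_self k), dist_le_pi_dist v w k⟩
  exact Metric.hausdorffDist_le_of_mem_dist dist_nonneg (hnear v w) (dist_comm v w ▸ hnear w v)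

theorem continuous_apply_originSimplex (hY : Continuous fun K : PolySp n => Y (K.1 : Set (En n))) :
    Continuous fun v : Fin n → En n => Y (originSimplex v) := by
  have hlip : LipschitzWith 1 fun v : Fin n → En n => (isPolytope_originSimplex v).toPolySp :=
    LipschitzWith.mk_one fun v w => hausdorffDist_originSimplex_le v w
  exact hY.comp hlip.continuous

/-- The standard basis with its `k`-th vector scaled by `c k`. -/
def diagonalFrame {n : ℕ} (c : Fin n → ℝ) : Fin n → En n :=
  fun k => c k • EuclideanSpace.basisFun (Fin n) ℝ k

theorem columnDet_basisFun : columnDet (EuclideanSpace.basisFun (Fin n) ℝ) = 1 := by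
  rw [← OrthonormalBasis.coe_toBasis, columnDet, Module.Basis.det_self]

theorem columnDet_diagonalFrame (c : Fin n → ℝ) : columnDet (diagonalFrame c) = ∏ k, c k := by
  unfold diagonalFrame
  rw [AlternatingMap.map_smul_univ, columnDet_basisFun, smul_eq_mul, mul_one]

theorem sum_smul_diagonalFrame_apply (a c : Fin n → ℝ) (k : Fin n) :
    (∑ j, a j • diagonalFrame c j) k = a k * c k := by
  simp [diagonalFrame, Pi.single_apply]

theorem continuous_coeff (hY : Continuous fun K : PolySp n => Y (K.1 : Set (En n))) (hn : 2 ≤ n)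
    {A : ℝ → Fin n → ℝ}
    (hA : ∀ v : Fin n → En n, Y (originSimplex v) = ∑ k, A (columnDet v) k • v k) (k : Fin n) :
    Continuous fun t => A t k := by
  have : Nontrivial (Fin n) := Fin.nontrivial_iff_two_le.2 hn
  obtain ⟨i, hik⟩ := exists_ne k
  let frame (t : ℝ) : Fin n → En n := diagonalFrame (Pi.mulSingle i t)
  have hframe (t : ℝ) : A t k = Y (originSimplex (frame t)) k := by
    rw [hA, sum_smul_diagonalFrame_apply, columnDet_diagonalFrame,
      Fintype.prod_pi_mulSingle', Pi.mulSingle_eq_of_ne hik.symm, mul_one]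
  have hcont : Continuous frame := by
    have hc (j : Fin n) : Continuous fun t : ℝ => (Pi.mulSingle i t : Fin n → ℝ) j := by
      simp only [Pi.mulSingle_apply]
      split_ifs <;> fun_prop
    exact continuous_pi fun j => (hc j).smul continuous_const
  simp only [hframe]
  exact (continuous_apply k).comp
    ((PiLp.continuous_ofLp 2 _).comp ((continuous_apply_originSimplex hY).comp hcont))

end Continuity

section Coefficients

variable {n : ℕ} {Y : Set (En n) → En n}

theorem range_update {ι E : Type*} [DecidableEq ι] (w : ι → E) (j : ι) (p : E) :
    range (Function.update w j p) = insert p (w '' {j}ᶜ) := by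
  rw [← insert_image_compl_eq_range _ j, Function.update_self]
  exact congrArg (insert p) (image_congr fun k hk => Function.update_of_ne hk p w)

theorem insert_zero_range_update {ι E : Type*} [DecidableEq ι] [Zero E] (w : ι → E) {i j : ι}
    (hij : i ≠ j) (p : E) :
    insert 0 (range (Function.update w j p)) =
      insert (w i) (insert p (insert 0 (w '' {i, j}ᶜ))) := by
  have hcompl : ({j}ᶜ : Set ι) = insert i {i, j}ᶜ := by grind
  rw [range_update, hcompl, image_insert_eq, insert_comm p, insert_comm 0, insert_comm 0]

theorem notMem_affineSpan_insert_zero_range_update {ι E : Type*} [DecidableEq ι] [AddCommGroup E]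
    [Module ℝ E] {w : ι → E} (hw : LinearIndependent ℝ w) (i : ι) :
    w i ∉ affineSpan ℝ (insert 0 (range (Function.update w i 0))) := by
  rw [range_update, insert_idem]
  rw [← SetLike.mem_coe, affineSpan_insert_zero, SetLike.mem_coe]
  exact hw.notMem_span_image fun h => h rfl

theorem IsPolyValuation.originSimplex_eq_add_update (hY : IsPolyValuation Y) (hs : IsPolySimple Y)
    {w : Fin n → En n} (hw : LinearIndependent ℝ w) {i j : Fin n} (hij : i ≠ j) {p : En n}
    (hp : p ∈ openSegment ℝ (w i) (w j)) :
    Y (originSimplex w) =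
      Y (originSimplex (Function.update w j p)) + Y (originSimplex (Function.update w i p)) := by
  have hsides := insert_zero_range_update w hij (w j)
  have hi := notMem_affineSpan_insert_zero_range_update hw i
  have hj := notMem_affineSpan_insert_zero_range_update hw j
  rw [insert_zero_range_update w hij.symm, insert_comm 0, insert_idem, pair_comm] at hi
  rw [insert_zero_range_update w hij, insert_comm 0, insert_idem] at hj
  rw [Function.update_eq_self] at hsides
  simp only [originSimplex]
  rw [hsides, insert_zero_range_update w hij, insert_zero_range_update w hij.symm, pair_comm j i]
  exact hY.eq_add_of_mem_openSegment hs (((toFinite _).image w).insert 0) hp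
    (notMem_affineSpan_insert_of_mem_openSegment hp hi hj)

theorem sum_smul_update {ι E : Type*} [Fintype ι] [DecidableEq ι] [AddCommGroup E] [Module ℝ E]
    (a : ι → ℝ) (w : ι → E) (j : ι) (p : E) :
    ∑ k, a k • Function.update w j p k = ∑ k, a k • w k + a j • (p - w j) := by
  rw [← sub_eq_iff_eq_add', ← Finset.sum_sub_distrib, Fintype.sum_eq_single j]
  · rw [Function.update_self, smul_sub]
  · intro k hk
    rw [Function.update_of_ne hk, sub_self]

theorem columnDet_update_add_smul (w : Fin n → En n) {i j : Fin n} (hij : i ≠ j) (a b : ℝ) :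
    columnDet (Function.update w j (a • w i + b • w j)) = b * columnDet w := by
  rw [AlternatingMap.map_update_add, AlternatingMap.map_update_smul, AlternatingMap.map_update_smul,
    AlternatingMap.map_update_self _ _ hij.symm, Function.update_eq_self, smul_zero, zero_add,
    smul_eq_mul]

theorem coeff_eq_of_cut (hY : IsPolyValuation Y) (hs : IsPolySimple Y)
    {A : ℝ → Fin n → ℝ}
    (hA : ∀ v : Fin n → En n, Y (originSimplex v) = ∑ k, A (columnDet v) k • v k)
    {i j : Fin n} (hij : i ≠ j) {x y : ℝ} (hx : 0 < x) (hy : 0 < y) :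
    (x + y) * A (x + y) i = (x + y) * A x i + y * (A x j + A y i) := by
  have hxy := add_pos hx hy
  set w : Fin n → En n := diagonalFrame (Pi.mulSingle i (x + y)) with hw
  have hdet : columnDet w = x + y := by
    rw [hw, columnDet_diagonalFrame, Fintype.prod_pi_mulSingle']
  set p : En n := (y / (x + y)) • w i + (x / (x + y)) • w j with hp_def
  have hp : p ∈ openSegment ℝ (w i) (w j) :=
    ⟨_, _, div_pos hy hxy, div_pos hx hxy, by rw [← add_div, add_comm y, div_self hxy.ne'], rfl⟩
  have hdetj : columnDet (Function.update w j p) = x := by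
    rw [columnDet_update_add_smul w hij, hdet, div_mul_cancel₀ _ hxy.ne']
  have hdeti : columnDet (Function.update w i p) = y := by
    rw [hp_def, add_comm (_ • w i), columnDet_update_add_smul w hij.symm, hdet,
      div_mul_cancel₀ _ hxy.ne']
  have hcut := hY.originSimplex_eq_add_update hs
    (linearIndependent_of_columnDet_ne_zero (hdet.trans_ne hxy.ne')) hij hp
  rw [hA, hA, hA, hdetj, hdeti, hdet, sum_smul_update, sum_smul_update] at hcut
  have hwi : w i i = x + y := by simp [hw, diagonalFrame]
  have hwj : w j i = 0 := by simp [hw, diagonalFrame, hij]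
  have hpi : p i = y := by
    simp only [hp_def, PiLp.add_apply, PiLp.smul_apply, smul_eq_mul, hwi, hwj]
    field
  have hsum (a : Fin n → ℝ) : (∑ k, a k • w k) i = a i * (x + y) := by
    rw [hw, sum_smul_diagonalFrame_apply, Pi.mulSingle_eq_same]
  have hcoord := congrArg (· i) hcut
  simp only [PiLp.add_apply, PiLp.sub_apply, PiLp.smul_apply, smul_eq_mul, hpi, hwi, hwj,
    hsum] at hcoord
  linarith

end Coefficients

section MomentVector

theorem mem_of_ball_subset_thickening {E : Type*} [NormedAddCommGroup E] [NormedSpace ℝ E]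
    {K : Set E} (hcl : IsClosed K) (hc : Convex ℝ K) {x : E} {r : ℝ} (hr : 0 < r)
    (h : Metric.ball x r ⊆ Metric.thickening r K) : x ∈ K := by
  by_contra hx
  -- The functional `f` separates `x` from `K`; moving from `x` by `r` in a direction in which `f`
  -- nearly attains its norm therefore leads out of the thickening.
  obtain ⟨f, u, hfu, hux⟩ := geometric_hahn_banach_closed_point hc hcl hx
  obtain ⟨e, he, hfe⟩ := f.exists_lt_apply_of_lt_opNorm
    (sub_lt_self ‖f‖ (div_pos (sub_pos.2 hux) hr))
  wlog hpos : 0 ≤ f e generalizing e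
  · refine this (-e) (by rwa [norm_neg]) (by rwa [map_neg, norm_neg]) ?_
    rw [map_neg]
    linarith
  have hmem : x + r • e ∈ Metric.ball x r := by
    rw [mem_ball_iff_norm, add_sub_cancel_left, norm_smul, Real.norm_of_nonneg hr.le]
    exact mul_lt_of_lt_one_right hr he
  obtain ⟨y, hy, hxy⟩ := Metric.mem_thickening_iff.1 (h hmem)
  have hle : f (x + r • e) - f y ≤ ‖f‖ * r := by
    rw [← map_sub]
    refine (le_abs_self _).trans ((f.le_opNorm _).trans ?_)
    rw [← dist_eq_norm]
    gcongr
  have hge : ‖f‖ * r < r * f e + (f x - u) := by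
    rw [Real.norm_of_nonneg hpos, sub_lt_iff_lt_add, ← mul_lt_mul_iff_left₀ hr, add_mul,
      div_mul_cancel₀ _ hr.ne'] at hfe
    rwa [mul_comm r]
  rw [map_add, map_smul, smul_eq_mul] at hle
  linarith [hfu y hy]

theorem eventually_subset_thickening {α : Type*} [MetricSpace α] (K : NonemptyCompacts α) {r : ℝ}
    (hr : 0 < r) : ∀ᶠ L : NonemptyCompacts α in 𝓝 K,
      (K : Set α) ⊆ Metric.thickening r L ∧ (L : Set α) ⊆ Metric.thickening r K := by
  filter_upwards [Metric.ball_mem_nhds K hr] with L hL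
  rw [Metric.mem_ball, Metric.NonemptyCompacts.dist_eq] at hL
  have hfin := Metric.hausdorffEDist_ne_top_of_nonempty_of_bounded L.nonempty K.nonempty
    L.isCompact.isBounded K.isCompact.isBounded
  refine ⟨fun x hx => ?_, fun x hx => ?_⟩ <;> rw [Metric.mem_thickening_iff]
  · obtain ⟨y, hy, hyx⟩ := Metric.exists_dist_lt_of_hausdorffDist_lt' hx hL hfin
    exact ⟨y, hy, dist_comm x y ▸ hyx⟩
  · exact Metric.exists_dist_lt_of_hausdorffDist_lt hx hL hfin

section ConvexBodies

variable {E : Type*} [NormedAddCommGroup E] [NormedSpace ℝ E] {ι : Type*} {l : Filter ι}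
  {K : ι → NonemptyCompacts E} {K₀ : NonemptyCompacts E}

theorem eventually_mem_iff_of_notMem_frontier (hK : ∀ i, Convex ℝ (K i : Set E))
    (hlim : Tendsto K l (𝓝 K₀)) {x : E} (hx : x ∉ frontier (K₀ : Set E)) :
    ∀ᶠ i in l, x ∈ (K i : Set E) ↔ x ∈ (K₀ : Set E) := by
  by_cases hxK : x ∈ (K₀ : Set E)
  · have hxi : x ∈ interior (K₀ : Set E) := by
      by_contra h
      exact hx ⟨subset_closure hxK, h⟩
    obtain ⟨r, hr, hball⟩ := Metric.isOpen_iff.1 isOpen_interior x hxi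
    filter_upwards [hlim.eventually (eventually_subset_thickening K₀ hr)] with i hi
    refine iff_of_true (mem_of_ball_subset_thickening (K i).isCompact.isClosed (hK i) hr ?_) hxK
    exact hball.trans (interior_subset.trans hi.1)
  · have hev := hlim.eventually (NonemptyCompacts.isOpen_subsets_of_isOpen
      (isOpen_compl_singleton (x := x)) |>.mem_nhds (subset_compl_singleton_iff.2 hxK))
    filter_upwards [hev] with i hi
    exact iff_of_false (subset_compl_singleton_iff.1 hi) hxK

theorem tendsto_setIntegral_of_convex [FiniteDimensional ℝ E] [MeasurableSpace E] [BorelSpace E]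
    {μ : Measure E} [μ.IsAddHaarMeasure] {F : Type*} [NormedAddCommGroup F] [NormedSpace ℝ F]
    {f : E → F} (hf : LocallyIntegrable f μ) [l.IsCountablyGenerated]
    (hK : ∀ i, Convex ℝ (K i : Set E)) (hK₀ : Convex ℝ (K₀ : Set E)) (hlim : Tendsto K l (𝓝 K₀)) :
    Tendsto (fun i => ∫ x in K i, f x ∂μ) l (𝓝 (∫ x in K₀, f x ∂μ)) := by
  have hmeas (L : NonemptyCompacts E) : MeasurableSet (L : Set E) := L.isCompact.measurableSet
  have hB : IsCompact (Metric.cthickening 1 (K₀ : Set E)) := K₀.isCompact.cthickening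
  simp only [← integral_indicator (hmeas _)]
  refine tendsto_integral_filter_of_dominated_convergence
    ((Metric.cthickening 1 (K₀ : Set E)).indicator fun x => ‖f x‖) ?_ ?_ ?_ ?_
  · exact Eventually.of_forall fun i => hf.aestronglyMeasurable.indicator (hmeas _)
  · filter_upwards [hlim.eventually (eventually_subset_thickening K₀ one_pos)] with i hi
    refine Eventually.of_forall fun x => ?_
    rw [norm_indicator_eq_indicator_norm]
    exact indicator_le_indicator_of_subset (hi.2.trans (Metric.thickening_subset_cthickening 1 _))
      (fun x => norm_nonneg (f x)) x
  · exact (integrable_indicator_iff hB.measurableSet).2 (hf.integrableOn_isCompact hB).norm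
  · have hfrontier : ∀ᵐ x ∂μ, x ∉ frontier (K₀ : Set E) :=
      measure_eq_zero_iff_ae_notMem.1 (hK₀.addHaar_frontier μ)
    filter_upwards [hfrontier] with x hx
    refine tendsto_const_nhds.congr' ?_
    filter_upwards [eventually_mem_iff_of_notMem_frontier hK hlim hx] with i hi
    by_cases hxK : x ∈ (K₀ : Set E)
    · rw [indicator_of_mem hxK, indicator_of_mem (hi.2 hxK)]
    · rw [indicator_of_notMem hxK, indicator_of_notMem (mt hi.1 hxK)]

end ConvexBodies

section LinearImage

variable {E : Type*} [NormedAddCommGroup E] [NormedSpace ℝ E] [FiniteDimensional ℝ E]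
  [MeasurableSpace E] [BorelSpace E] {μ : Measure E} [μ.IsAddHaarMeasure]

theorem setIntegral_image_of_det_eq_one {F : Type*} [NormedAddCommGroup F] [NormedSpace ℝ F]
    {L : E →ₗ[ℝ] E} (hL : LinearMap.det L = 1) (s : Set E) (g : E → F) :
    ∫ x in L '' s, g x ∂μ = ∫ x in s, g (L x) ∂μ := by
  have hL₀ : LinearMap.det L ≠ 0 := hL.trans_ne one_ne_zero
  have hpres : MeasurePreserving L μ μ := by
    refine ⟨L.continuous_of_finiteDimensional.measurable, ?_⟩
    rw [Measure.map_linearMap_addHaar_eq_smul_addHaar μ hL₀, hL, inv_one, abs_one,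
      ENNReal.ofReal_one, one_smul]
  have hker : LinearMap.ker L = ⊥ := by
    by_contra h
    exact hL₀ (LinearMap.det_eq_zero_iff_ker_ne_bot.2 h)
  exact hpres.setIntegral_image_emb
    (LinearMap.isClosedEmbedding_of_injective hker).measurableEmbedding g s

theorem setIntegral_pos_of_interior_nonempty {s : Set E} (hs : IsCompact s)
    (hint : (interior s).Nonempty) {f : StrongDual ℝ E} (hf : f ≠ 0) (hfs : ∀ x ∈ s, 0 ≤ f x) :
    0 < ∫ x in s, f x ∂μ := by
  have hker : μ (LinearMap.ker f.toLinearMap : Set E) = 0 :=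
    Measure.addHaar_submodule μ _ fun h => hf <| ContinuousLinearMap.coe_injective <|
      LinearMap.ker_eq_top.1 h
  have hsupp : Function.support f ∩ s = s \ LinearMap.ker f.toLinearMap := by
    rw [inter_comm]; rfl
  rw [setIntegral_pos_iff_support_of_nonneg_ae
    (ae_restrict_of_forall_mem hs.measurableSet hfs)
    (f.continuous.continuousOn.integrableOn_compact hs), hsupp, measure_sdiff_null hker]
  exact Measure.measure_pos_of_nonempty_interior μ hint

end LinearImage

variable {n : ℕ}

theorem continuous_momentSet : Continuous fun K : PolySp n => momentSet (K.1 : Set (En n)) :=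
  continuous_iff_continuousAt.2 fun K => tendsto_setIntegral_of_convex
    continuous_id.locallyIntegrable (fun L => L.2.convex) K.2.convex continuousAt_subtype_val

theorem isPolySimple_momentSet (hn : n ≠ 0) : IsPolySimple (momentSet (n := n)) := by
  intro Q _ hQ
  have hspan : affineSpan ℝ Q ≠ ⊤ := fun h => by
    rw [← direction_affineSpan, h, AffineSubspace.direction_top, finrank_top,
      finrank_euclideanSpace_fin] at hQ
    omega
  have hnull : volume Q = 0 :=
    measure_mono_null (subset_affineSpan ℝ Q) (Measure.addHaar_affineSubspace _ _ hspan)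
  rw [momentSet, setIntegral_measure_zero _ hnull]

theorem isPolyValuation_momentSet : IsPolyValuation (momentSet (n := n)) := by
  intro P Q hP hQ hPQ hPQ'
  have hint {K : Set (En n)} (hK : IsPolytope K) : IntegrableOn (fun x : En n => x) K :=
    continuous_id.continuousOn.integrableOn_compact hK.isCompact
  simp only [momentSet]
  rw [← integral_add_measure (hint hP) (hint hQ), ← integral_add_measure (hint hPQ) (hint hPQ'),
    Measure.restrict_union_add_inter P hQ.isCompact.measurableSet]

theorem isPolySLCovariant_momentSet : IsPolySLCovariant (momentSet (n := n)) := by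
  intro Q hQ ϑ hϑ
  have hdet : LinearMap.det (Matrix.toEuclideanLin ϑ) = 1 := by
    rw [Matrix.toEuclideanLin_eq_toLin_orthonormal, LinearMap.det_toLin, hϑ]
  exact (setIntegral_image_of_det_eq_one hdet Q fun x => x).trans
    ((Matrix.toEuclideanLin ϑ).toContinuousLinearMap.integral_comp_comm
      (continuous_id.continuousOn.integrableOn_compact hQ.isCompact))

theorem momentSet_ne_zero {Q : Set (En n)} (hQ : IsCompact Q) (hint : (interior Q).Nonempty)
    {f : StrongDual ℝ (En n)} (hf : f ≠ 0) (hfQ : ∀ x ∈ Q, 0 ≤ f x) : momentSet Q ≠ 0 := by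
  intro h
  have hpos := setIntegral_pos_of_interior_nonempty (μ := volume) hQ hint hf hfQ
  have hcomm := f.integral_comp_comm
    (continuous_id.continuousOn.integrableOn_compact hQ : IntegrableOn (fun x : En n => x) Q)
  exact hpos.ne' (hcomm.trans ((congrArg f h).trans (map_zero f)))

end MomentVector

section Classification

variable {n : ℕ} {Y Z : Set (En n) → En n}

/-- A simple, continuous and `SL(n)` covariant valuation on polytopes. -/
structure IsSimpleCovariantValuation {n : ℕ} (Y : Set (En n) → En n) : Prop where
  continuous : Continuous fun K : PolySp n => Y (K.1 : Set (En n))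
  simple : IsPolySimple Y
  valuation : IsPolyValuation Y
  covariant : IsPolySLCovariant Y

theorem isSimpleCovariantValuation_momentSet (hn : n ≠ 0) :
    IsSimpleCovariantValuation (momentSet (n := n)) :=
  ⟨continuous_momentSet, isPolySimple_momentSet hn, isPolyValuation_momentSet,
    isPolySLCovariant_momentSet⟩

theorem IsPolytope.image_matVec {Q : Set (En n)} (hQ : IsPolytope Q)
    (ϑ : Matrix (Fin n) (Fin n) ℝ) : IsPolytope (matVec ϑ '' Q) := by
  obtain ⟨S, hS, rfl⟩ := hQ
  have himage := (Matrix.toEuclideanLin ϑ).image_convexHull (S : Set (En n))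
  exact himage ▸ isPolytope_convexHull (S.finite_toSet.image _) ((Finset.coe_nonempty.2 hS).image _)

theorem IsSimpleCovariantValuation.sub (hY : IsSimpleCovariantValuation Y)
    (hZ : IsSimpleCovariantValuation Z) : IsSimpleCovariantValuation (Y - Z) where
  continuous := hY.continuous.sub hZ.continuous
  simple Q hQ hdim := by rw [Pi.sub_apply, hY.simple Q hQ hdim, hZ.simple Q hQ hdim, sub_zero]
  valuation P Q hP hQ hPQ hPQ' := by
    simp only [Pi.sub_apply]
    rw [sub_add_sub_comm, sub_add_sub_comm, hY.valuation P Q hP hQ hPQ hPQ',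
      hZ.valuation P Q hP hQ hPQ hPQ']
  covariant Q hQ ϑ hϑ := by
    rw [Pi.sub_apply, hY.covariant Q hQ ϑ hϑ, hZ.covariant Q hQ ϑ hϑ]
    exact (map_sub (Matrix.toEuclideanLin ϑ) _ _).symm

theorem IsSimpleCovariantValuation.const_smul (hY : IsSimpleCovariantValuation Y) (c : ℝ) :
    IsSimpleCovariantValuation (c • Y) where
  continuous := hY.continuous.const_smul c
  simple Q hQ hdim := by rw [Pi.smul_apply, hY.simple Q hQ hdim, smul_zero]
  valuation P Q hP hQ hPQ hPQ' := by
    simp only [Pi.smul_apply]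
    rw [← smul_add, ← smul_add, hY.valuation P Q hP hQ hPQ hPQ']
  covariant Q hQ ϑ hϑ := by
    rw [Pi.smul_apply, hY.covariant Q hQ ϑ hϑ]
    exact (map_smul (Matrix.toEuclideanLin ϑ) _ _).symm

theorem IsSimpleCovariantValuation.congr (hY : IsSimpleCovariantValuation Y)
    (h : ∀ Q, IsPolytope Q → Z Q = Y Q) : IsSimpleCovariantValuation Z where
  continuous := hY.continuous.congr fun K => (h _ K.2).symm
  simple Q hQ hdim := (h Q hQ).trans (hY.simple Q hQ hdim)
  valuation P Q hP hQ hPQ hPQ' := by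
    rw [h P hP, h Q hQ, h _ hPQ, h _ hPQ', hY.valuation P Q hP hQ hPQ hPQ']
  covariant Q hQ ϑ hϑ := by
    rw [h Q hQ, h _ (hQ.image_matVec ϑ), hY.covariant Q hQ ϑ hϑ]

theorem IsSimpleCovariantValuation.exists_apply_originSimplex (hn : 2 ≤ n)
    (hY : IsSimpleCovariantValuation Y) : ∃ c : ℝ, ∀ v : Fin n → En n, 0 ≤ columnDet v →
      Y (originSimplex v) = (c * columnDet v) • ∑ k, v k := by
  choose A hA₀ hA using hY.covariant.exists_apply_originSimplex hY.simple
  replace hA (v : Fin n → En n) : Y (originSimplex v) = ∑ k, A (columnDet v) k • v k := hA _ v rfl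
  have hcont := continuous_coeff hY.continuous hn hA
  have hcut {i j : Fin n} (hij : i ≠ j) {x y : ℝ} (hx : 0 < x) (hy : 0 < y) :=
    coeff_eq_of_cut hY.valuation hY.simple hA hij hx hy
  have hlinear {i j : Fin n} (hij : i ≠ j) {t : ℝ} (ht : 0 ≤ t) :
      A t i = t * A 1 i ∧ A t j = t * A 1 i := by
    refine eq_mul_of_simplex_cut_eq (hcont i) (hcont j) (by rw [hA₀ 0 rfl]; rfl)
      (by rw [hA₀ 0 rfl]; rfl) (fun x y hx hy => hcut hij hx hy) (fun x y hx hy => ?_) ht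
    rw [add_comm x y, add_comm (A x j)]
    exact hcut hij.symm hy hx
  have : Nontrivial (Fin n) := Fin.nontrivial_iff_two_le.2 hn
  obtain ⟨i, j, hij⟩ := exists_pair_ne (Fin n)
  refine ⟨A 1 i, fun v hv => ?_⟩
  have hcoeff (k : Fin n) : A (columnDet v) k = A 1 i * columnDet v := by
    rw [mul_comm]
    rcases eq_or_ne i k with rfl | hik
    · exact (hlinear hij hv).1
    · exact (hlinear hik hv).2
  simp only [hA, hcoeff, Finset.smul_sum]

theorem exists_insert_zero_range_eq {T : Set (En n)} (hT : AffineIndependent ℝ ((↑) : T → En n))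
    (h0 : 0 ∈ T) : ∃ v : Fin n → En n, insert 0 (range v) = T := by
  have hlin : LinearIndependent ℝ ((↑) : ↥(T \ {0}) → En n) := by
    have himage : (· -ᵥ (0 : En n)) '' (T \ {0}) = T \ {0} := by
      simp only [vsub_eq_sub, sub_zero, image_id']
    exact himage ▸ (affineIndependent_set_iff_linearIndependent_vsub ℝ h0).1 hT
  have := hlin.setFinite.fintype
  have hcard : Fintype.card ↥(T \ {0}) ≤ Fintype.card (Fin n) := by
    simpa only [Fintype.card_fin, finrank_euclideanSpace_fin] using hlin.fintype_card_le_finrank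
  obtain ⟨f⟩ := Function.Embedding.nonempty_of_card_le hcard
  refine ⟨Function.extend f (↑) 0, ?_⟩
  have hzero : (0 : Fin n → En n) '' (range f)ᶜ ⊆ {0} := by
    rintro _ ⟨_, _, rfl⟩
    rfl
  rw [range_extend f.injective, Subtype.range_coe, ← singleton_union, union_left_comm,
    union_eq_self_of_subset_right hzero, sdiff_union_of_subset (singleton_subset_iff.2 h0)]

theorem exists_originSimplex_eq_convexHull (hn : 2 ≤ n) {T : Set (En n)}
    (hT : AffineIndependent ℝ ((↑) : T → En n)) (h0 : 0 ∈ T) :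
    ∃ v : Fin n → En n, 0 ≤ columnDet v ∧ originSimplex v = convexHull ℝ T := by
  obtain ⟨u, rfl⟩ := exists_insert_zero_range_eq hT h0
  rcases le_total 0 (columnDet u) with hpos | hneg
  · exact ⟨u, hpos, rfl⟩
  have : Nontrivial (Fin n) := Fin.nontrivial_iff_two_le.2 hn
  obtain ⟨i, j, hij⟩ := exists_pair_ne (Fin n)
  refine ⟨u ∘ Equiv.swap i j, ?_, ?_⟩
  · rw [columnDet.map_swap u hij]
    exact neg_nonneg.2 hneg
  · rw [originSimplex, (Equiv.swap i j).surjective.range_comp]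

theorem momentSet_originSimplex_basisFun_ne_zero (hn : n ≠ 0) :
    momentSet (originSimplex (EuclideanSpace.basisFun (Fin n) ℝ)) ≠ 0 := by
  let i : Fin n := ⟨0, Nat.pos_of_ne_zero hn⟩
  have hproj_basis (k : Fin n) :
      EuclideanSpace.proj i (EuclideanSpace.basisFun (Fin n) ℝ k) =
        if i = k then (1 : ℝ) else 0 := by
    rw [EuclideanSpace.basisFun_apply, PiLp.proj_apply, PiLp.single_apply]
  have hproj : (EuclideanSpace.proj i : StrongDual ℝ (En n)) ≠ 0 := fun h => by
    simpa only [h, zero_apply, if_true, zero_ne_one] using hproj_basis i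
  have hspan : affineSpan ℝ (insert 0 (range (EuclideanSpace.basisFun (Fin n) ℝ))) = ⊤ :=
    affineSpan_insert_zero_range_eq_top_iff.2 (columnDet_basisFun.trans_ne one_ne_zero)
  refine momentSet_ne_zero (isPolytope_originSimplex _).isCompact
    (interior_convexHull_nonempty_iff_affineSpan_eq_top.2 hspan) hproj fun x hx => ?_
  refine convexHull_min (t := {x | 0 ≤ EuclideanSpace.proj i x}) ?_
    (convex_halfSpace_ge (EuclideanSpace.proj i : StrongDual ℝ (En n)).isLinear 0) hx
  rintro _ (rfl | ⟨k, rfl⟩)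
  · exact (map_zero (EuclideanSpace.proj i : StrongDual ℝ (En n))).ge
  · exact (ite_nonneg zero_le_one le_rfl).trans_eq (hproj_basis k).symm

theorem IsSimpleCovariantValuation.exists_eq_smul_momentSet (hn : 2 ≤ n)
    (hY : IsSimpleCovariantValuation Y) : ∃ c : ℝ, ∀ Q, IsPolytope Q → Y Q = c • momentSet Q := by
  have hn₀ : n ≠ 0 := by omega
  have hm := isSimpleCovariantValuation_momentSet hn₀
  obtain ⟨a, ha⟩ := hY.exists_apply_originSimplex hn
  obtain ⟨b, hb⟩ := hm.exists_apply_originSimplex hn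
  have hb₀ : b ≠ 0 := by
    rintro rfl
    refine momentSet_originSimplex_basisFun_ne_zero hn₀ ?_
    rw [hb _ (columnDet_basisFun.symm ▸ zero_le_one), zero_mul, zero_smul]
  have hdiff := hY.sub (hm.const_smul (a / b))
  refine ⟨a / b, fun Q hQ => sub_eq_zero.1 ?_⟩
  refine hdiff.valuation.eq_zero_of_forall_simplex_zero_mem hdiff.simple (fun T hT h0 => ?_) hQ
  obtain ⟨v, hv, hvT⟩ := exists_originSimplex_eq_convexHull hn hT h0
  rw [← hvT, Pi.sub_apply, Pi.smul_apply, ha v hv, hb v hv, smul_smul, ← mul_assoc,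
    div_mul_cancel₀ _ hb₀, sub_self]

end Classification

/-- For `n ≥ 2`, an operator `Y : 𝒫ⁿ → ℝⁿ` is a simple, continuous
(w.r.t. the Hausdorff metric) and `SL(n)` covariant valuation if and only if there is a
constant `c ∈ ℝ` such that `Y Q = c m(Q)` for all `Q ∈ 𝒫ⁿ`. -/
theorem statement1 (n : ℕ) (hn : 2 ≤ n) (Y : Set (En n) → En n) :
    (Continuous (fun K : PolySp n => Y (K.1 : Set (En n))) ∧
      (∀ Q : Set (En n), IsPolytope Q →
        Module.finrank ℝ (vectorSpan ℝ Q) ≤ n - 1 → Y Q = 0) ∧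
      IsPolyValuation Y ∧ IsPolySLCovariant Y) ↔
    ∃ c : ℝ, ∀ Q : Set (En n), IsPolytope Q → Y Q = c • momentSet Q := by
  constructor
  · rintro ⟨hcont, hsimple, hval, hcov⟩
    exact IsSimpleCovariantValuation.exists_eq_smul_momentSet hn ⟨hcont, hsimple, hval, hcov⟩
  · rintro ⟨c, hc⟩
    have hY := ((isSimpleCovariantValuation_momentSet (by omega)).const_smul c).congr hc
    exact ⟨hY.continuous, hY.simple, hY.valuation, hY.covariant⟩

end
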